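/- arXiv:2311.15119 — 4 statements merged into one kernel-verified Lean document; each statement's English description precedes it below -/
import Mathlib

section
/- Let D ⊆ ℝⁿ be an open set with x_eq ∈ D. Suppose there exists a continuously differentiable function V : D → ℝ such that: (1) V(x_eq) = 0 and V(x) > 0 for all x ∈ D \ {x_eq}; (2) ∇V(x)·f(x) = −q(x) for all x ∈ D, where q : ℝⁿ → ℝ is continuous, q(x_eq) = 0 and q(x) > 0 for x ≠ x_eq; (3) for every m > 0 there exists a compact set K ⊆ D such that V(x) > m for all x ∈ D \ K (i.e., V(x) → ∞ as x → ∂D or |x| → ∞). Then D equals the region of attraction D(x_eq) = {x ∈ ℝⁿ : φ(t,x) → x_eq as t → ∞}. -/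
open Filter Topology
open scoped RealInnerProductSpace

noncomputable section

/-!
Along a trajectory inside `D` the value of `V` changes at rate `-q`, and the sublevel sets of `V`
in `D` are compact. Hence a curve can leave `D` only if `V` increases without bound along it, which
cannot happen in finite time as long as the rate of change of `V` is bounded above.

A trajectory starting in `D` has rate `-q ≤ 0`, so it stays in a compact sublevel set. There `q` is
bounded below by a positive constant wherever `V ≥ ε`, so `V` tends to `0` along the trajectory,
which therefore converges to the only zero of `V`. Conversely, a trajectory converging to `xeq` is
in `D` at some time `T`; run backwards from time `T`, it has rate `q`, which is bounded on
`[0, T]`, so its starting point lies in `D` as well.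
-/

open Set

/-- Positive definiteness of `g` on `D` with respect to the point `p`. Membership of `p` in `D` is
not part of the notion. -/
structure PosDefOn {E : Type*} (g : E → ℝ) (p : E) (D : Set E) : Prop where
  eq_zero : g p = 0
  pos : ∀ x ∈ D, x ≠ p → 0 < g x

namespace PosDefOn

variable {E : Type*} {g : E → ℝ} {p : E} {D : Set E}

theorem nonneg (hg : PosDefOn g p D) {x : E} (hx : x ∈ D) : 0 ≤ g x := by
  rcases eq_or_ne x p with rfl | hxp
  · exact hg.eq_zero.ge
  · exact (hg.pos x hx hxp).le

theorem eq_of_eq_zero (hg : PosDefOn g p D) {x : E} (hx : x ∈ D) (h : g x = 0) : x = p :=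
  by_contra fun hxp => (hg.pos x hx hxp).ne' h

end PosDefOn

/-- The region of attraction of `p`: the initial states whose trajectories under `φ`, which takes
the time as its first argument, converge to `p`. -/
def regionOfAttraction {E : Type*} [TopologicalSpace E] (φ : ℝ → E → E) (p : E) : Set E :=
  {x | Tendsto (fun t => φ t x) atTop (𝓝 p)}

section RealFunction

variable {u u' : ℝ → ℝ}

theorem le_add_mul_sub_of_hasDerivWithinAt_le {a b C : ℝ} (hab : a ≤ b)
    (hu : ∀ t ∈ Icc a b, HasDerivWithinAt u (u' t) (Icc a b) t)
    (hC : ∀ t ∈ Icc a b, u' t ≤ C) : u b ≤ u a + C * (b - a) := by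
  have hanti : AntitoneOn (fun t => u t - C * t) (Icc a b) := by
    have hderiv (t : ℝ) (ht : t ∈ Icc a b) :
        HasDerivWithinAt (fun s => u s - C * s) (u' t - C) (Icc a b) t := by
      simpa using (hu t ht).fun_sub ((hasDerivWithinAt_id t _).const_mul C)
    exact antitoneOn_of_hasDerivWithinAt_nonpos (convex_Icc a b)
      (fun t ht => (hderiv t ht).continuousWithinAt)
      (fun t ht => (hderiv t (interior_subset ht)).mono interior_subset)
      (fun t ht => sub_nonpos.2 (hC t (interior_subset ht)))
  have hle : u b - C * b ≤ u a - C * a := hanti (left_mem_Icc.2 hab) (right_mem_Icc.2 hab) hab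
  linarith

theorem tendsto_zero_of_hasDerivWithinAt_le_neg
    (hu : ∀ t ∈ Ici 0, HasDerivWithinAt u (u' t) (Ici 0) t)
    (hanti : AntitoneOn u (Ici 0)) (hnonneg : ∀ t ∈ Ici 0, 0 ≤ u t)
    (hneg : ∀ ε > 0, ∃ c > 0, ∀ t ∈ Ici 0, ε ≤ u t → u' t ≤ -c) :
    Tendsto u atTop (𝓝 0) := by
  have hsmall (ε : ℝ) (hε : 0 < ε) : ∃ T ∈ Ici 0, u T < ε := by
    by_contra! hlarge
    obtain ⟨c, hc, hu'⟩ := hneg ε hε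
    have hT : 0 ≤ u 0 / c := div_nonneg (hnonneg 0 self_mem_Ici) hc.le
    have hle : u (u 0 / c) ≤ u 0 + -c * (u 0 / c - 0) :=
      le_add_mul_sub_of_hasDerivWithinAt_le hT
        (fun t ht => (hu t ht.1).mono Icc_subset_Ici_self)
        (fun t ht => hu' t ht.1 (hlarge t ht.1))
    have hzero : u 0 + -c * (u 0 / c - 0) = 0 := by field_simp; ring
    linarith [hlarge _ hT]
  refine tendsto_order.2 ⟨fun ε hε => ?_, fun ε hε => ?_⟩
  · filter_upwards [eventually_ge_atTop 0] with t ht using hε.trans_le (hnonneg t ht)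
  · obtain ⟨T, hT, hTε⟩ := hsmall ε hε
    filter_upwards [eventually_ge_atTop T] with t ht
    exact (hanti hT (hT.trans ht) ht).trans_lt hTε

end RealFunction

theorem hasDerivWithinAt_comp_of_hasGradientAt {F : Type*} [NormedAddCommGroup F]
    [InnerProductSpace ℝ F] [CompleteSpace F] {V : F → ℝ} {z : ℝ → F} {G z' : F} {s : Set ℝ} {t : ℝ}
    (hV : HasGradientAt V G (z t)) (hz : HasDerivWithinAt z z' s t) :
    HasDerivWithinAt (fun r => V (z r)) ⟪G, z'⟫ s t :=
  hV.hasFDerivAt.comp_hasDerivWithinAt t hz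

section Topology

variable {E : Type*} [TopologicalSpace E] {D K S : Set E}

theorem isCompact_setOf_mem_and_le {V : E → ℝ} (hV : ContinuousOn V D) (hKD : K ⊆ D)
    (hK : IsCompact K) {m : ℝ} (hm : ∀ x ∈ D \ K, m < V x) : IsCompact {x ∈ D | V x ≤ m} := by
  have heq : {x ∈ D | V x ≤ m} = K ∩ V ⁻¹' Iic m := by
    ext x
    exact ⟨fun hx => ⟨by_contra fun hxK => (hm x ⟨hx.1, hxK⟩).not_ge hx.2, hx.2⟩,
      fun hx => ⟨hKD hx.1, hx.2⟩⟩
  rw [heq]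
  exact (hV.mono hKD).lowerSemicontinuousOn.isCompact_inter_preimage_Iic hK m

theorem tendsto_nhds_of_tendsto_comp_nhds {ι Y : Type*} [TopologicalSpace Y] [T2Space Y]
    {l : Filter ι} {g : E → Y} {z : ι → E} {p : E} {y : Y} (hS : IsCompact S)
    (hg : ContinuousOn g S) (hgp : ∀ x ∈ S, g x = y → x = p) (hz : ∀ᶠ i in l, z i ∈ S)
    (hlim : Tendsto (g ∘ z) l (𝓝 y)) : Tendsto z l (𝓝 p) := by
  refine hS.tendsto_nhds_of_unique_mapClusterPt hz fun x hxS hx => hgp x hxS ?_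
  have hgx : MapClusterPt (g x) l (g ∘ z) :=
    hx.tendsto_comp' ((hg x hxS).mono_left (inf_le_inf_left _ (le_principal_iff.2 hz)))
  exact eq_of_nhds_neBot (ClusterPt.mono hgx hlim)

-- At the first exit time from `D` the curve is a limit of points of `S`, hence in `S ⊆ D`.
theorem mapsTo_Icc_of_forall_mapsTo_imp_mem {z : ℝ → E} {a b : ℝ} (hD : IsOpen D)
    (hS : IsClosed S) (hSD : S ⊆ D) (hz : ContinuousOn z (Icc a b)) (hza : z a ∈ D)
    (hstep : ∀ t ∈ Icc a b, MapsTo z (Icc a t) D → z t ∈ S) : MapsTo z (Icc a b) D := by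
  by_contra hexit
  have hcompact : IsCompact (Icc a b ∩ z ⁻¹' Dᶜ) :=
    isCompact_Icc.of_isClosed_subset
      (hz.preimage_isClosed_of_isClosed isClosed_Icc hD.isClosed_compl) inter_subset_left
  have hne : (Icc a b ∩ z ⁻¹' Dᶜ).Nonempty := by
    simpa [MapsTo, Set.Nonempty, and_assoc] using hexit
  obtain ⟨τ, ⟨hτ, hzτ⟩, hmin⟩ := hcompact.exists_isLeast hne
  have haτ : a < τ := hτ.1.lt_of_ne fun h => hzτ (h ▸ hza)
  have hbefore : MapsTo z (Ico a τ) D := fun s hs =>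
    not_not.1 fun hzs => (hmin ⟨⟨hs.1, hs.2.le.trans hτ.2⟩, hzs⟩).not_gt hs.2
  have hbeforeS : MapsTo z (Ico a τ) S := fun s hs =>
    hstep s ⟨hs.1, hs.2.le.trans hτ.2⟩ (hbefore.mono_left (Icc_subset_Ico_right hs.2))
  have hzτS : z τ ∈ closure S :=
    ((hz τ hτ).mono (Ico_subset_Icc_self.trans (Icc_subset_Icc_right hτ.2))).mem_closure
      (by simp [closure_Ico haτ.ne, haτ.le]) hbeforeS
  exact hzτ (hSD (hS.closure_eq ▸ hzτS))

theorem PosDefOn.exists_pos_forall_le {V q : E → ℝ} {p : E} (hq : PosDefOn q p D)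
    (hqc : ContinuousOn q S) (hVc : ContinuousOn V S) (hS : IsCompact S) (hSD : S ⊆ D) {ε : ℝ}
    (hε : V p < ε) : ∃ c > 0, ∀ x ∈ S, ε ≤ V x → c ≤ q x := by
  have hcompact : IsCompact (S ∩ V ⁻¹' Ici ε) :=
    hVc.upperSemicontinuousOn.isCompact_inter_preimage_Ici hS ε
  have hpos (x : E) (hx : x ∈ S ∩ V ⁻¹' Ici ε) : 0 < q x :=
    hq.pos x (hSD hx.1) fun hxp => hε.not_ge (hxp ▸ hx.2)
  obtain ⟨c, hc, hcq⟩ := hcompact.exists_forall_le' (hqc.mono inter_subset_left) hpos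
  exact ⟨c, hc, fun x hxS hxε => hcq x ⟨hxS, hxε⟩⟩

end Topology

section Confinement

variable {E : Type*} [TopologicalSpace E] {D : Set E} {V : E → ℝ} {z : ℝ → E} {v : ℝ → ℝ}
  {a b C : ℝ}

theorem mapsTo_Icc_of_hasDerivWithinAt_comp_le (hD : IsOpen D)
    (hV : ∀ m, IsClosed {x ∈ D | V x ≤ m}) (hz : ContinuousOn z (Icc a b)) (hza : z a ∈ D)
    (hv : ∀ t ∈ Icc a b, z t ∈ D → HasDerivWithinAt (V ∘ z) (v t) (Icc a b) t)
    (hC : ∀ t ∈ Icc a b, z t ∈ D → v t ≤ C) : MapsTo z (Icc a b) D := by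
  refine mapsTo_Icc_of_forall_mapsTo_imp_mem hD (hV (V (z a) + |C| * (b - a))) (sep_subset D _) hz
    hza fun t ht hzD => ⟨hzD (right_mem_Icc.2 ht.1), ?_⟩
  have hsub : Icc a t ⊆ Icc a b := Icc_subset_Icc_right ht.2
  calc V (z t) ≤ V (z a) + C * (t - a) :=
        le_add_mul_sub_of_hasDerivWithinAt_le ht.1
          (fun s hs => (hv s (hsub hs) (hzD hs)).mono hsub) (fun s hs => hC s (hsub hs) (hzD hs))
    _ ≤ V (z a) + |C| * (b - a) := by
        have hat : 0 ≤ t - a := sub_nonneg.2 ht.1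
        gcongr
        exacts [le_abs_self C, ht.2]

theorem mapsTo_Icc_of_le_hasDerivWithinAt_comp (hD : IsOpen D)
    (hV : ∀ m, IsClosed {x ∈ D | V x ≤ m}) (hz : ContinuousOn z (Icc a b)) (hzb : z b ∈ D)
    (hv : ∀ t ∈ Icc a b, z t ∈ D → HasDerivWithinAt (V ∘ z) (v t) (Icc a b) t)
    (hC : ∀ t ∈ Icc a b, z t ∈ D → C ≤ v t) : MapsTo z (Icc a b) D := by
  have hneg : MapsTo Neg.neg (Icc (-b) (-a)) (Icc a b) := fun t ht =>
    ⟨le_neg.1 ht.2, neg_le.1 ht.1⟩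
  have hreversed : MapsTo (z ∘ Neg.neg) (Icc (-b) (-a)) D :=
    mapsTo_Icc_of_hasDerivWithinAt_comp_le (v := fun t => -v (-t)) (C := -C) hD hV
      (hz.comp continuous_neg.continuousOn hneg) (by simpa using hzb)
      (fun t ht hzt => by
        simpa [Function.comp_assoc] using
          (hv (-t) (hneg ht) hzt).scomp t (hasDerivAt_neg t).hasDerivWithinAt hneg)
      (fun t ht hzt => neg_le_neg (hC (-t) (hneg ht) hzt))
  intro t ht
  simpa using hreversed (neg_mem_Icc_iff.2 (by simpa using ht) : -t ∈ Icc (-b) (-a))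

end Confinement

section Trajectory

variable {E : Type*} [TopologicalSpace E] [T2Space E] {D : Set E} {V q : E → ℝ} {p : E}
  {γ : ℝ → E}

theorem tendsto_of_hasDerivWithinAt_comp_neg (hD : IsOpen D) (hVc : ContinuousOn V D)
    (hV : PosDefOn V p D) (hVcompact : ∀ m, IsCompact {x ∈ D | V x ≤ m})
    (hqc : ContinuousOn q D) (hq : PosDefOn q p D) (hγ : ContinuousOn γ (Ici 0)) (hγ0 : γ 0 ∈ D)
    (hVγ : ∀ t ∈ Ici 0, γ t ∈ D → HasDerivWithinAt (V ∘ γ) (-q (γ t)) (Ici 0) t) :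
    Tendsto γ atTop (𝓝 p) := by
  have hγD : MapsTo γ (Ici 0) D := fun t ht =>
    mapsTo_Icc_of_hasDerivWithinAt_comp_le hD (fun m => (hVcompact m).isClosed)
      (hγ.mono Icc_subset_Ici_self) hγ0
      (fun s hs hsD => (hVγ s hs.1 hsD).mono Icc_subset_Ici_self)
      (fun s _ hsD => neg_nonpos.2 (hq.nonneg hsD)) (right_mem_Icc.2 ht)
  have hderiv (t : ℝ) (ht : t ∈ Ici 0) : HasDerivWithinAt (V ∘ γ) (-q (γ t)) (Ici 0) t :=
    hVγ t ht (hγD ht)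
  have hanti : AntitoneOn (V ∘ γ) (Ici 0) :=
    antitoneOn_of_hasDerivWithinAt_nonpos (convex_Ici 0)
      (fun t ht => (hderiv t ht).continuousWithinAt)
      (fun t ht => (hderiv t (interior_subset ht)).mono interior_subset)
      (fun t ht => neg_nonpos.2 (hq.nonneg (hγD (interior_subset ht))))
  set S := {x ∈ D | V x ≤ V (γ 0)}
  have hSD : S ⊆ D := sep_subset D _
  have hγS : MapsTo γ (Ici 0) S := fun t ht => ⟨hγD ht, hanti self_mem_Ici ht ht⟩
  have hVlim : Tendsto (V ∘ γ) atTop (𝓝 0) := by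
    refine tendsto_zero_of_hasDerivWithinAt_le_neg hderiv hanti
      (fun t ht => hV.nonneg (hγD ht)) fun ε hε => ?_
    obtain ⟨c, hc, hcq⟩ := hq.exists_pos_forall_le (hqc.mono hSD) (hVc.mono hSD)
      (hVcompact _) hSD (hV.eq_zero.trans_lt hε)
    exact ⟨c, hc, fun t ht hεt => neg_le_neg (hcq _ (hγS ht) hεt)⟩
  exact tendsto_nhds_of_tendsto_comp_nhds (hVcompact _) (hVc.mono hSD)
    (fun x hx => hV.eq_of_eq_zero (hSD hx))
    ((eventually_ge_atTop 0).mono fun t ht => hγS ht) hVlim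

theorem mem_of_tendsto_of_hasDerivWithinAt_comp_neg (hD : IsOpen D) (hpD : p ∈ D)
    (hVcompact : ∀ m, IsCompact {x ∈ D | V x ≤ m}) (hqc : Continuous q)
    (hγ : ContinuousOn γ (Ici 0))
    (hVγ : ∀ t ∈ Ici 0, γ t ∈ D → HasDerivWithinAt (V ∘ γ) (-q (γ t)) (Ici 0) t)
    (hlim : Tendsto γ atTop (𝓝 p)) : γ 0 ∈ D := by
  obtain ⟨T, hTD, hT⟩ :=
    ((hlim.eventually_mem (hD.mem_nhds hpD)).and (eventually_ge_atTop 0)).exists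
  have hγT : ContinuousOn γ (Icc 0 T) := hγ.mono Icc_subset_Ici_self
  obtain ⟨C, hC⟩ := isCompact_Icc.bddAbove_image (hqc.comp_continuousOn hγT)
  refine mapsTo_Icc_of_le_hasDerivWithinAt_comp (C := -C) hD (fun m => (hVcompact m).isClosed)
    hγT hTD (fun t ht htD => (hVγ t ht.1 htD).mono Icc_subset_Ici_self)
    (fun t ht _ => neg_le_neg (hC (mem_image_of_mem _ ht))) (left_mem_Icc.2 hT)

end Trajectory

theorem zubov_max_lyapunov_general {E : Type*} [TopologicalSpace E] [T2Space E] {φ : ℝ → E → E}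
    {xeq : E} {D : Set E} {V q : E → ℝ} (hφ0 : ∀ x, φ 0 x = x)
    (hφ : ∀ x, ContinuousOn (fun t => φ t x) (Ici 0)) (hD : IsOpen D) (hxeqD : xeq ∈ D)
    (hVc : ContinuousOn V D) (hV : PosDefOn V xeq D) (hqc : Continuous q) (hq : PosDefOn q xeq D)
    (hVφ : ∀ x, ∀ t ∈ Ici 0, φ t x ∈ D →
      HasDerivWithinAt (fun s => V (φ s x)) (-q (φ t x)) (Ici 0) t)
    (hproper : ∀ m > 0, ∃ K ⊆ D, IsCompact K ∧ ∀ x ∈ D \ K, m < V x) :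
    D = regionOfAttraction φ xeq := by
  have hcompact (m : ℝ) : IsCompact {x ∈ D | V x ≤ m} := by
    obtain ⟨K, hKD, hK, hVK⟩ := hproper (max m 1) (by positivity)
    exact isCompact_setOf_mem_and_le hVc hKD hK fun x hx => (le_max_left m 1).trans_lt (hVK x hx)
  ext x
  constructor
  · intro hx
    exact tendsto_of_hasDerivWithinAt_comp_neg hD hVc hV hcompact hqc.continuousOn hq (hφ x)
      ((hφ0 x).symm ▸ hx) (hVφ x)
  · intro hx
    exact hφ0 x ▸ mem_of_tendsto_of_hasDerivWithinAt_comp_neg hD hxeqD hcompact hqc (hφ x)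
      (hVφ x) hx

/-- Maximal Lyapunov function theorem (Theorem `max_lyap`):
if `V` is a `C¹` positive-definite function on an open set `D ∋ x_eq` whose derivative
along solutions equals `-q` with `q` continuous positive definite, and `V` blows up at the
boundary of `D` (and at infinity), then `D` is exactly the region of attraction of `x_eq`. -/
theorem zubov_max_lyapunov {n : ℕ}
    (f : EuclideanSpace ℝ (Fin n) → EuclideanSpace ℝ (Fin n))
    (φ : ℝ → EuclideanSpace ℝ (Fin n) → EuclideanSpace ℝ (Fin n))
    (xeq : EuclideanSpace ℝ (Fin n))
    (hf : LocallyLipschitz f)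
    (hφ0 : ∀ x, φ 0 x = x)
    (hφd : ∀ x, ∀ t ≥ (0:ℝ), HasDerivWithinAt (fun s => φ s x) (f (φ t x)) (Set.Ici 0) t)
    (hφadd : ∀ x, ∀ s ≥ (0:ℝ), ∀ t ≥ (0:ℝ), φ s (φ t x) = φ (t + s) x)
    (hfeq : f xeq = 0)
    (hstab : ∃ δ > (0:ℝ), ∃ M > (0:ℝ), ∃ c > (0:ℝ), ∀ x : EuclideanSpace ℝ (Fin n),
      ‖x - xeq‖ ≤ δ → ∀ t ≥ (0:ℝ), ‖φ t x - xeq‖ ≤ M * ‖x - xeq‖ * Real.exp (-c * t))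
    (D : Set (EuclideanSpace ℝ (Fin n))) (hD : IsOpen D) (hxeqD : xeq ∈ D)
    (V : EuclideanSpace ℝ (Fin n) → ℝ)
    (gV : EuclideanSpace ℝ (Fin n) → EuclideanSpace ℝ (Fin n))
    (q : EuclideanSpace ℝ (Fin n) → ℝ)
    (hV : ContDiffOn ℝ 1 V D)
    (hV0 : V xeq = 0)
    (hVpos : ∀ x ∈ D, x ≠ xeq → 0 < V x)
    (hgrad : ∀ x ∈ D, HasGradientAt V (gV x) x)
    (hpde : ∀ x ∈ D, ⟪gV x, f x⟫ = - q x)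
    (hq : Continuous q) (hq0 : q xeq = 0) (hqpos : ∀ x, x ≠ xeq → 0 < q x)
    (hproper : ∀ m > (0:ℝ), ∃ K, K ⊆ D ∧ IsCompact K ∧ ∀ x ∈ D \ K, m < V x) :
    D = {x | Tendsto (fun t => φ t x) atTop (𝓝 xeq)} := by
  exact zubov_max_lyapunov_general hφ0 (fun x t ht => (hφd x t ht).continuousWithinAt) hD hxeqD
    hV.continuousOn ⟨hV0, hVpos⟩ hq ⟨hq0, fun x _ => hqpos x⟩
    (fun x t ht hx => hpde _ hx ▸ hasDerivWithinAt_comp_of_hasGradientAt (hgrad _ hx) (hφd x t ht))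
    hproper
end
end

section
/- The function V is positive definite with respect to x_eq, i.e., V(x_eq) = 0 and V(x) > 0 for all x ≠ x_eq; and V(x) → ∞ as x approaches the boundary of the region of attraction: for every y ∈ ∂D(x_eq) and every sequence x_k ∈ D(x_eq) with x_k → y, V(x_k) → ∞. -/
open Filter Topology MeasureTheory
open scoped ENNReal

noncomputable section

/-- `V(x) = ∫₀^∞ η(φ(t,x)) dt`, with value `∞` if the integral diverges. -/
def zubovV {n : ℕ} (φ : ℝ → EuclideanSpace ℝ (Fin n) → EuclideanSpace ℝ (Fin n))
    (η : EuclideanSpace ℝ (Fin n) → ℝ) (x : EuclideanSpace ℝ (Fin n)) : ℝ≥0∞ :=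
  ∫⁻ t in Set.Ioi (0:ℝ), ENNReal.ofReal (η (φ t x))

/-!
The cost of an orbit is bounded below by `m * T` whenever `η ≥ m` along it up to time `T`. Let `y`
lie outside the basin of attraction. By stability there is a neighbourhood `W` of the equilibrium
all of whose orbits stay in a closed subset `K` of the basin, and `η ≥ m > 0` off `W`. For every
`T`, the state reached from `y` at time `T` lies outside the basin, so by continuity the orbits of
all `x` near `y` are outside `K` at time `T`, hence have not entered `W` before; their cost is at
least `m * T`.
-/

section OrbitCost

variable {X : Type*}

/-- The total cost `∫₀^∞ η(φ(t,x)) dt` of the orbit of `x`: `zubovV` on an arbitrary state space.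
As a lower integral it makes sense for nonmeasurable `η`. -/
def orbitCost (φ : ℝ → X → X) (η : X → ℝ) (x : X) : ℝ≥0∞ :=
  ∫⁻ t in Set.Ioi (0 : ℝ), ENNReal.ofReal (η (φ t x))

variable {φ : ℝ → X → X} {x₀ : X} {η : X → ℝ}

theorem ofReal_mul_ofReal_le_orbitCost {x : X} {m T : ℝ}
    (h : ∀ t ∈ Set.Ioo 0 T, m ≤ η (φ t x)) :
    ENNReal.ofReal m * ENNReal.ofReal T ≤ orbitCost φ η x :=
  calc ENNReal.ofReal m * ENNReal.ofReal T
      = ∫⁻ _ in Set.Ioo (0 : ℝ) T, ENNReal.ofReal m := by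
        rw [setLIntegral_const, Real.volume_Ioo, sub_zero]
    _ ≤ ∫⁻ t in Set.Ioo (0 : ℝ) T, ENNReal.ofReal (η (φ t x)) :=
        setLIntegral_mono' measurableSet_Ioo fun t ht => ENNReal.ofReal_le_ofReal (h t ht)
    _ ≤ orbitCost φ η x := lintegral_mono_set Set.Ioo_subset_Ioi_self

theorem orbitCost_eq_zero (hfix : ∀ t ≥ 0, φ t x₀ = x₀) (hη : η x₀ = 0) :
    orbitCost φ η x₀ = 0 := by
  have hzero : Set.EqOn (fun t => ENNReal.ofReal (η (φ t x₀))) 0 (Set.Ioi 0) := fun t ht => by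
    simp [hfix t (le_of_lt ht), hη]
  rw [orbitCost, setLIntegral_congr_fun measurableSet_Ioi hzero]
  exact lintegral_zero

end OrbitCost

section Semiflow

variable {X : Type*} [TopologicalSpace X] {φ : ℝ → X → X} {x₀ : X} {η : X → ℝ}

/-- A semiflow on `X`, separately continuous in time and in the state. Time ranges over `ℝ`, but
only the values at nonnegative times are constrained. -/
structure IsSemiflow (φ : ℝ → X → X) : Prop where
  map_zero : ∀ x, φ 0 x = x
  map_add : ∀ x, ∀ s ≥ 0, ∀ t ≥ 0, φ s (φ t x) = φ (t + s) x
  continuousOn_time : ∀ x, ContinuousOn (fun t => φ t x) (Set.Ici 0)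
  continuous_state : ∀ t ≥ 0, Continuous (φ t)

/-- The region of attraction of `x₀`. -/
def attractionBasin (φ : ℝ → X → X) (x₀ : X) : Set X :=
  {x | Tendsto (fun t => φ t x) atTop (𝓝 x₀)}

/-- Local asymptotic stability of the point `x₀`: Lyapunov stability together with local
attractivity. -/
structure IsAsymptoticallyStable (φ : ℝ → X → X) (x₀ : X) : Prop where
  stable : ∀ U ∈ 𝓝 x₀, ∀ᶠ x in 𝓝 x₀, ∀ t ≥ 0, φ t x ∈ U
  attractive : attractionBasin φ x₀ ∈ 𝓝 x₀

theorem IsSemiflow.apply_mem_attractionBasin_iff (hφ : IsSemiflow φ) {t : ℝ} (ht : 0 ≤ t) {x : X} :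
    φ t x ∈ attractionBasin φ x₀ ↔ x ∈ attractionBasin φ x₀ := by
  have hshift : (fun s => φ s (φ t x)) =ᶠ[atTop] fun s => φ (s + t) x := by
    filter_upwards [eventually_ge_atTop 0] with s hs
    rw [hφ.map_add x s hs t ht, add_comm]
  have hmap : map (fun s => s + t) atTop = atTop := (OrderIso.addRight t).map_atTop
  calc Tendsto (fun s => φ s (φ t x)) atTop (𝓝 x₀)
      ↔ Tendsto ((fun s => φ s x) ∘ fun s => s + t) atTop (𝓝 x₀) := tendsto_congr' hshift
    _ ↔ Tendsto (fun s => φ s x) (map (fun s => s + t) atTop) (𝓝 x₀) := tendsto_map'_iff.symm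
    _ ↔ Tendsto (fun s => φ s x) atTop (𝓝 x₀) := by rw [hmap]

theorem IsSemiflow.isOpen_attractionBasin (hφ : IsSemiflow φ) (h : attractionBasin φ x₀ ∈ 𝓝 x₀) :
    IsOpen (attractionBasin φ x₀) := by
  refine isOpen_iff_mem_nhds.2 fun x hx => ?_
  obtain ⟨T, hT, hT0⟩ : ∃ T, attractionBasin φ x₀ ∈ 𝓝 (φ T x) ∧ 0 ≤ T :=
    ((hx.eventually (eventually_eventually_nhds.2 h)).and
      (eventually_ge_atTop 0)).exists
  filter_upwards [(hφ.continuous_state T hT0).continuousAt hT] with z hz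
  exact (hφ.apply_mem_attractionBasin_iff hT0).1 hz

theorem IsAsymptoticallyStable.notMem_attractionBasin_of_mem_frontier
    (hs : IsAsymptoticallyStable φ x₀) (hφ : IsSemiflow φ) {y : X}
    (hy : y ∈ frontier (attractionBasin φ x₀)) : y ∉ attractionBasin φ x₀ :=
  ((hφ.isOpen_attractionBasin hs.attractive).frontier_eq ▸ hy).2

theorem IsAsymptoticallyStable.apply_eq [T1Space X] (hs : IsAsymptoticallyStable φ x₀) {t : ℝ}
    (ht : 0 ≤ t) : φ t x₀ = x₀ :=
  pure_le_nhds_iff.1 fun U hU => (hs.stable U hU).self_of_nhds t ht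

theorem orbitCost_pos [T3Space X] (hφ : IsSemiflow φ)
    (hη : ∀ U ∈ 𝓝 x₀, ∃ m > 0, ∀ y ∉ U, m ≤ η y) {x : X} (hx : x ≠ x₀) :
    0 < orbitCost φ η x := by
  obtain ⟨K, hK, hKclosed, hxK⟩ := exists_mem_nhds_isClosed_subset (isOpen_ne.mem_nhds hx.symm)
  obtain ⟨m, hm, hmη⟩ := hη K hK
  have hleave : ∀ᶠ t in 𝓝[≥] (0 : ℝ), φ t x ∈ Kᶜ := by
    have hx0 : φ 0 x ∈ Kᶜ := by
      rw [hφ.map_zero]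
      exact fun h => hxK h rfl
    exact hφ.continuousOn_time x 0 Set.self_mem_Ici (hKclosed.isOpen_compl.mem_nhds hx0)
  obtain ⟨ε, hε, hεK⟩ := mem_nhdsGE_iff_exists_Ico_subset.1 hleave
  calc 0 < ENNReal.ofReal m * ENNReal.ofReal ε :=
        ENNReal.mul_pos (ENNReal.ofReal_pos.2 hm).ne' (ENNReal.ofReal_pos.2 hε).ne'
    _ ≤ orbitCost φ η x :=
        ofReal_mul_ofReal_le_orbitCost fun t ht => hmη _ (hεK ⟨ht.1.le, ht.2⟩)

theorem IsAsymptoticallyStable.exists_nhds_eventually_forall_notMem [RegularSpace X]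
    (hs : IsAsymptoticallyStable φ x₀) (hφ : IsSemiflow φ) {y : X}
    (hy : y ∉ attractionBasin φ x₀) :
    ∃ W ∈ 𝓝 x₀, ∀ T ≥ 0, ∀ᶠ x in 𝓝 y, ∀ t ∈ Set.Icc 0 T, φ t x ∉ W := by
  obtain ⟨K, hK, hKclosed, hKbasin⟩ := exists_mem_nhds_isClosed_subset hs.attractive
  refine ⟨{x | ∀ t ≥ 0, φ t x ∈ K}, hs.stable K hK, fun T hT => ?_⟩
  have hyT : φ T y ∉ K := fun h => hy ((hφ.apply_mem_attractionBasin_iff hT).1 (hKbasin h))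
  filter_upwards [(hφ.continuous_state T hT).continuousAt (hKclosed.isOpen_compl.mem_nhds hyT)]
    with x hxT t ht hxt
  have hxTK : φ (T - t) (φ t x) ∈ K := hxt (T - t) (sub_nonneg.2 ht.2)
  rw [hφ.map_add x _ (sub_nonneg.2 ht.2) t ht.1, add_sub_cancel] at hxTK
  exact hxT hxTK

theorem IsAsymptoticallyStable.tendsto_orbitCost_nhds_top [RegularSpace X]
    (hs : IsAsymptoticallyStable φ x₀) (hφ : IsSemiflow φ)
    (hη : ∀ U ∈ 𝓝 x₀, ∃ m > 0, ∀ y ∉ U, m ≤ η y) {y : X} (hy : y ∉ attractionBasin φ x₀) :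
    Tendsto (orbitCost φ η) (𝓝 y) (𝓝 ⊤) := by
  obtain ⟨W, hW, hWy⟩ := hs.exists_nhds_eventually_forall_notMem hφ hy
  obtain ⟨m, hm, hmη⟩ := hη W hW
  have hbound : Tendsto (fun T => ENNReal.ofReal m * ENNReal.ofReal T) atTop (𝓝 ⊤) := by
    rw [← ENNReal.mul_top (ENNReal.ofReal_pos.2 hm).ne']
    exact ENNReal.Tendsto.const_mul ENNReal.tendsto_ofReal_atTop (.inl ENNReal.top_ne_zero)
  refine ENNReal.tendsto_nhds_top fun N => ?_
  obtain ⟨T, hNT, hT⟩ := ((hbound.eventually (lt_mem_nhds (ENNReal.natCast_lt_top N))).and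
    (eventually_ge_atTop 0)).exists
  filter_upwards [hWy T hT] with x hx
  exact hNT.trans_le <| ofReal_mul_ofReal_le_orbitCost fun t ht =>
    hmη _ (hx t (Set.Ioo_subset_Icc_self ht))

end Semiflow

section ContinuousDependence

theorem forall_mem_Icc_lt_of_forall_mem_Ico_lt {α β : Type*} [ConditionallyCompleteLinearOrder α]
    [TopologicalSpace α] [OrderTopology α] [LinearOrder β] [TopologicalSpace β]
    [ClosedIciTopology β] {g : α → β} {a b : α} {r : β}
    (hg : ContinuousOn g (Set.Icc a b))
    (hstep : ∀ t ∈ Set.Icc a b, (∀ s ∈ Set.Ico a t, g s < r) → g t < r) :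
    ∀ t ∈ Set.Icc a b, g t < r := by
  by_contra! hcon
  have hcompact : IsCompact (Set.Icc a b ∩ g ⁻¹' Set.Ici r) :=
    isCompact_Icc.of_isClosed_subset (hg.preimage_isClosed_of_isClosed isClosed_Icc isClosed_Ici)
      Set.inter_subset_left
  obtain ⟨t, ⟨ht, hrt⟩, hleast⟩ := hcompact.exists_isLeast hcon
  refine (hstep t ht fun s hs => ?_).not_ge hrt
  by_contra! hrs
  exact (hleast ⟨⟨hs.1, hs.2.le.trans ht.2⟩, hrs⟩).not_gt hs.2

theorem exists_forall_lipschitzOnWith_ball_of_isCompact {α β : Type*} [PseudoMetricSpace α]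
    [PseudoEMetricSpace β] {f : α → β} (hf : LocallyLipschitz f) {s : Set α} (hs : IsCompact s) :
    ∃ L : NNReal, ∃ r > 0, ∀ z ∈ s, LipschitzOnWith L f (Metric.ball z r) := by
  refine hs.induction_on ⟨0, 1, one_pos, by simp⟩ ?_ ?_ fun z _ => ?_
  · rintro s t hst ⟨L, r, hr, h⟩
    exact ⟨L, r, hr, fun z hz => h z (hst hz)⟩
  · rintro s t ⟨L₁, r₁, hr₁, h₁⟩ ⟨L₂, r₂, hr₂, h₂⟩
    refine ⟨max L₁ L₂, min r₁ r₂, lt_min hr₁ hr₂, fun z hz => ?_⟩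
    rcases hz with hz | hz
    · exact ((h₁ z hz).mono (Metric.ball_subset_ball (min_le_left _ _))).weaken (le_max_left _ _)
    · exact ((h₂ z hz).mono (Metric.ball_subset_ball (min_le_right _ _))).weaken (le_max_right _ _)
  · obtain ⟨L, U, hU, hL⟩ := hf z
    obtain ⟨r, hr, hrU⟩ := Metric.mem_nhds_iff.1 hU
    have hhalf : Metric.ball z (r / 2) ∈ 𝓝 z := Metric.ball_mem_nhds z (half_pos hr)
    refine ⟨Metric.ball z (r / 2), mem_nhdsWithin_of_mem_nhds hhalf,
      L, r / 2, half_pos hr, fun w hw => hL.mono (subset_trans ?_ hrU)⟩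
    exact Metric.ball_subset_ball' (by linarith [Metric.mem_ball.1 hw])

variable {E : Type*} [NormedAddCommGroup E] [NormedSpace ℝ E]

theorem dist_le_of_trajectories_ODE_of_lipschitzOnWith_ball {v : ℝ → E → E} {γ σ : ℝ → E}
    {a b r : ℝ} {L : NNReal}
    (hv : ∀ t ∈ Set.Ico a b, LipschitzOnWith L (v t) (Metric.ball (σ t) r))
    (hγ : ContinuousOn γ (Set.Icc a b))
    (hγ' : ∀ t ∈ Set.Ico a b, HasDerivWithinAt γ (v t (γ t)) (Set.Ici t) t)
    (hσ : ContinuousOn σ (Set.Icc a b))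
    (hσ' : ∀ t ∈ Set.Ico a b, HasDerivWithinAt σ (v t (σ t)) (Set.Ici t) t)
    (hr : dist (γ a) (σ a) * Real.exp (L * (b - a)) < r) :
    ∀ t ∈ Set.Icc a b, dist (γ t) (σ t) ≤ dist (γ a) (σ a) * Real.exp (L * (t - a)) := by
  have hr0 : 0 < r := (mul_nonneg dist_nonneg (Real.exp_nonneg _)).trans_lt hr
  have hgronwall : ∀ t ∈ Set.Icc a b, (∀ s ∈ Set.Ico a t, dist (γ s) (σ s) < r) →
      dist (γ t) (σ t) ≤ dist (γ a) (σ a) * Real.exp (L * (t - a)) := by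
    intro t ht hclose
    have hIco : Set.Ico a t ⊆ Set.Ico a b := Set.Ico_subset_Ico_right ht.2
    have hIcc : Set.Icc a t ⊆ Set.Icc a b := Set.Icc_subset_Icc_right ht.2
    exact dist_le_of_trajectories_ODE_of_mem (fun s hs => hv s (hIco hs)) (hγ.mono hIcc)
      (fun s hs => hγ' s (hIco hs)) hclose (hσ.mono hIcc) (fun s hs => hσ' s (hIco hs))
      (fun _ _ => Metric.mem_ball_self hr0) le_rfl t (Set.right_mem_Icc.2 ht.1)
  have hclose : ∀ t ∈ Set.Icc a b, dist (γ t) (σ t) < r := by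
    refine forall_mem_Icc_lt_of_forall_mem_Ico_lt (by fun_prop) fun t ht hlt => ?_
    calc dist (γ t) (σ t) ≤ dist (γ a) (σ a) * Real.exp (L * (t - a)) := hgronwall t ht hlt
      _ ≤ dist (γ a) (σ a) * Real.exp (L * (b - a)) := by gcongr; exact ht.2
      _ < r := hr
  exact fun t ht => hgronwall t ht fun s hs => hclose s ⟨hs.1, hs.2.le.trans ht.2⟩

variable {f : E → E} {φ : ℝ → E → E}

theorem continuous_flow_of_locallyLipschitz (hf : LocallyLipschitz f) (h0 : ∀ x, φ 0 x = x)
    (hd : ∀ x, ∀ t ≥ (0 : ℝ), HasDerivWithinAt (fun s => φ s x) (f (φ t x)) (Set.Ici 0) t)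
    {T : ℝ} (hT : 0 ≤ T) : Continuous (φ T) := by
  refine continuous_iff_continuousAt.2 fun y => ?_
  have hcont : ∀ x, ContinuousOn (fun t => φ t x) (Set.Icc 0 T) :=
    fun x t ht => (hd x t ht.1).continuousWithinAt.mono Set.Icc_subset_Ici_self
  have hderiv : ∀ x, ∀ t ∈ Set.Ico 0 T,
      HasDerivWithinAt (fun s => φ s x) (f (φ t x)) (Set.Ici t) t :=
    fun x t ht => (hd x t ht.1).mono (Set.Ici_subset_Ici.2 ht.1)
  obtain ⟨L, r, hr, hL⟩ := exists_forall_lipschitzOnWith_ball_of_isCompact hf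
    (isCompact_Icc.image_of_continuousOn (hcont y))
  have hbound : Tendsto (fun x => dist x y * Real.exp (L * T)) (𝓝 y) (𝓝 0) :=
    (by fun_prop : Continuous fun x => dist x y * Real.exp (L * T)).tendsto' y 0 (by simp)
  refine tendsto_iff_dist_tendsto_zero.2
    (squeeze_zero' (Eventually.of_forall fun _ => dist_nonneg) ?_ hbound)
  filter_upwards [hbound.eventually (gt_mem_nhds hr)] with x hx
  have hdist := dist_le_of_trajectories_ODE_of_lipschitzOnWith_ball (v := fun _ => f)
    (fun t ht => hL _ ⟨t, Set.Ico_subset_Icc_self ht, rfl⟩)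
    (hcont x) (hderiv x) (hcont y) (hderiv y) (by simpa only [h0, sub_zero] using hx)
    T (Set.right_mem_Icc.2 hT)
  simpa only [h0, sub_zero] using hdist

theorem isSemiflow_of_locallyLipschitz (hf : LocallyLipschitz f) (h0 : ∀ x, φ 0 x = x)
    (hd : ∀ x, ∀ t ≥ (0 : ℝ), HasDerivWithinAt (fun s => φ s x) (f (φ t x)) (Set.Ici 0) t)
    (hadd : ∀ x, ∀ s ≥ 0, ∀ t ≥ 0, φ s (φ t x) = φ (t + s) x) : IsSemiflow φ where
  map_zero := h0
  map_add := hadd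
  continuousOn_time x t ht := (hd x t ht).continuousWithinAt
  continuous_state _ := continuous_flow_of_locallyLipschitz hf h0 hd

end ContinuousDependence

theorem isAsymptoticallyStable_of_exponential {E : Type*} [SeminormedAddCommGroup E]
    {φ : ℝ → E → E} {x₀ : E} {δ M c : ℝ} (hδ : 0 < δ) (hc : 0 < c)
    (h : ∀ x, ‖x - x₀‖ ≤ δ → ∀ t ≥ 0, ‖φ t x - x₀‖ ≤ M * ‖x - x₀‖ * Real.exp (-c * t)) :
    IsAsymptoticallyStable φ x₀ := by
  have hball : ∀ᶠ x in 𝓝 x₀, ‖x - x₀‖ ≤ δ := by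
    filter_upwards [Metric.closedBall_mem_nhds x₀ hδ] with x hx using mem_closedBall_iff_norm.1 hx
  refine ⟨fun U hU => ?_, ?_⟩
  · obtain ⟨ε, hε, hεU⟩ := Metric.mem_nhds_iff.1 hU
    have hsmall : Tendsto (fun x => |M| * ‖x - x₀‖) (𝓝 x₀) (𝓝 0) :=
      (by fun_prop : Continuous fun x => |M| * ‖x - x₀‖).tendsto' x₀ 0 (by simp)
    filter_upwards [hball, hsmall.eventually (gt_mem_nhds hε)] with x hxδ hxε t ht
    refine hεU (mem_ball_iff_norm.2 ?_)
    calc ‖φ t x - x₀‖ ≤ M * ‖x - x₀‖ * Real.exp (-c * t) := h x hxδ t ht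
      _ ≤ |M| * ‖x - x₀‖ * 1 := by
        gcongr
        · exact le_abs_self M
        · exact Real.exp_le_one_iff.2 (by nlinarith)
      _ < ε := by rwa [mul_one]
  · filter_upwards [hball] with x hx
    have hexp : Tendsto (fun t => Real.exp (-c * t)) atTop (𝓝 0) :=
      Real.tendsto_exp_atBot.comp (tendsto_id.const_mul_atTop_of_neg (neg_lt_zero.2 hc))
    refine tendsto_iff_norm_sub_tendsto_zero.2 (squeeze_zero'
      (Eventually.of_forall fun _ => norm_nonneg _) ?_
      (by simpa only [mul_zero] using hexp.const_mul (M * ‖x - x₀‖)))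
    filter_upwards [eventually_ge_atTop 0] with t ht using h x hx t ht

theorem exists_forall_notMem_le_of_forall_norm {E : Type*} [SeminormedAddCommGroup E] {η : E → ℝ}
    {x₀ : E} (h : ∀ r > (0 : ℝ), ∃ m > (0 : ℝ), ∀ y, r ≤ ‖y - x₀‖ → m ≤ η y) :
    ∀ U ∈ 𝓝 x₀, ∃ m > 0, ∀ y ∉ U, m ≤ η y := by
  intro U hU
  obtain ⟨r, hr, hrU⟩ := Metric.mem_nhds_iff.1 hU
  obtain ⟨m, hm, hmη⟩ := h r hr
  exact ⟨m, hm, fun y hy => hmη y (not_lt.1 fun hyr => hy (hrU (mem_ball_iff_norm.2 hyr)))⟩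

theorem zubovV_posdef_and_boundary_blowup_general {X : Type*} [TopologicalSpace X] [T3Space X]
    {φ : ℝ → X → X} {x₀ : X} {η : X → ℝ}
    (hφ : IsSemiflow φ) (hs : IsAsymptoticallyStable φ x₀) (hη0 : η x₀ = 0)
    (hη : ∀ U ∈ 𝓝 x₀, ∃ m > 0, ∀ y ∉ U, m ≤ η y) :
    orbitCost φ η x₀ = 0 ∧ (∀ x, x ≠ x₀ → 0 < orbitCost φ η x) ∧
      ∀ y ∉ attractionBasin φ x₀, Tendsto (orbitCost φ η) (𝓝 y) (𝓝 ⊤) :=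
  ⟨orbitCost_eq_zero (fun _ => hs.apply_eq) hη0, fun _ => orbitCost_pos hφ hη,
    fun _ => hs.tendsto_orbitCost_nhds_top hφ hη⟩

/-- `V` is positive definite with respect to `x_eq`, and `V(x) → ∞` as `x`
approaches the boundary of the region of attraction. -/
theorem zubovV_posdef_and_boundary_blowup {n : ℕ}
    (f : EuclideanSpace ℝ (Fin n) → EuclideanSpace ℝ (Fin n))
    (φ : ℝ → EuclideanSpace ℝ (Fin n) → EuclideanSpace ℝ (Fin n))
    (xeq : EuclideanSpace ℝ (Fin n))
    (hf : LocallyLipschitz f)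
    (hφ0 : ∀ x, φ 0 x = x)
    (hφd : ∀ x, ∀ t ≥ (0:ℝ), HasDerivWithinAt (fun s => φ s x) (f (φ t x)) (Set.Ici 0) t)
    (hφadd : ∀ x, ∀ s ≥ (0:ℝ), ∀ t ≥ (0:ℝ), φ s (φ t x) = φ (t + s) x)
    (hfeq : f xeq = 0)
    (hstab : ∃ δ > (0:ℝ), ∃ M > (0:ℝ), ∃ c > (0:ℝ), ∀ x : EuclideanSpace ℝ (Fin n),
      ‖x - xeq‖ ≤ δ → ∀ t ≥ (0:ℝ), ‖φ t x - xeq‖ ≤ M * ‖x - xeq‖ * Real.exp (-c * t))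
    (η : EuclideanSpace ℝ (Fin n) → ℝ)
    (hη : LocallyLipschitz η) (hηnn : ∀ x, 0 ≤ η x)
    (hη0 : η xeq = 0) (hηpos : ∀ x, x ≠ xeq → 0 < η x)
    (hηinf : ∀ r > (0:ℝ), ∃ m > (0:ℝ), ∀ y, r ≤ ‖y - xeq‖ → m ≤ η y) :
    zubovV φ η xeq = 0 ∧
    (∀ x, x ≠ xeq → 0 < zubovV φ η x) ∧
    (∀ y ∈ frontier {x | Tendsto (fun t => φ t x) atTop (𝓝 xeq)},
      ∀ xk : ℕ → EuclideanSpace ℝ (Fin n),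
        (∀ k, Tendsto (fun t => φ t (xk k)) atTop (𝓝 xeq)) →
        Tendsto xk atTop (𝓝 y) →
        Tendsto (fun k => zubovV φ η (xk k)) atTop (𝓝 ⊤)) := by
  obtain ⟨δ, hδ, M, -, c, hc, hexp⟩ := hstab
  have hφ := isSemiflow_of_locallyLipschitz hf hφ0 hφd hφadd
  have hs := isAsymptoticallyStable_of_exponential hδ hc hexp
  obtain ⟨hzero, hpos, hblowup⟩ := zubovV_posdef_and_boundary_blowup_general hφ hs hη0
    (exists_forall_notMem_le_of_forall_norm hηinf)
  exact ⟨hzero, hpos, fun y hy _ _ hxk =>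
    (hblowup y (hs.notMem_attractionBasin_of_mem_frontier hφ hy)).comp hxk⟩
end
end

section
/- The stopped flow satisfies the flow-map properties: for every x ∈ R and all s, t ≥ 0, one has φ̂(t,x) ∈ R, φ̂(0,x) = x, and φ̂(s, φ̂(t,x)) = φ̂(t+s, x). -/
open Filter Topology
open scoped Classical

noncomputable section

/-- The set of nonnegative times at which the trajectory from `x` lies on `∂R`
(so `τ(x) = sInf` of this set when it is nonempty, and `τ(x) = ∞` when it is empty). -/
def hitSet {n : ℕ} (φ : ℝ → EuclideanSpace ℝ (Fin n) → EuclideanSpace ℝ (Fin n))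
    (R : Set (EuclideanSpace ℝ (Fin n))) (x : EuclideanSpace ℝ (Fin n)) : Set ℝ :=
  {t | 0 ≤ t ∧ φ t x ∈ frontier R}

/-- The stopped flow `φ̂(t,x) = φ(min(t, τ(x)), x)`. -/
def stopFlow {n : ℕ} (φ : ℝ → EuclideanSpace ℝ (Fin n) → EuclideanSpace ℝ (Fin n))
    (R : Set (EuclideanSpace ℝ (Fin n))) (t : ℝ) (x : EuclideanSpace ℝ (Fin n)) :
    EuclideanSpace ℝ (Fin n) :=
  if (hitSet φ R x).Nonempty then φ (min t (sInf (hitSet φ R x))) x else φ t x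

/-!
Put `σ(t, x) = min(t, τ(x))`, so that `φ̂(t, x) = φ(σ(t, x), x)`. A trajectory that starts in the
closed set `R` cannot leave it without meeting `∂R`, and no time before `σ(t, x)` is a hitting time,
so `φ̂(t, x) ∈ R`. Restarting at time `r = σ(t, x)`, which precedes every hitting time, translates
the set of hitting times by `-r`. This gives the cocycle identity
`σ(t + s, x) = σ(t, x) + σ(s, φ̂(t, x))`, which the semigroup law of `φ` turns into that of `φ̂`.
-/

theorem nonempty_inter_frontier_of_isPreconnected {X : Type*} [TopologicalSpace X] {S A : Set X}
    (hS : IsPreconnected S) (hA : (S ∩ A).Nonempty) (hAc : (S ∩ Aᶜ).Nonempty) :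
    (S ∩ frontier A).Nonempty := by
  by_contra hdisj
  have hcover : S ⊆ interior A ∪ interior Aᶜ := by
    rw [← compl_frontier_eq_union_interior]
    exact fun y hyS hy => hdisj ⟨y, hyS, hy⟩
  have hA_int : (S ∩ interior A).Nonempty :=
    hA.imp fun y ⟨hyS, hyA⟩ =>
      ⟨hyS, (hcover hyS).resolve_right fun hy => interior_subset hy hyA⟩
  have hAc_int : (S ∩ interior Aᶜ).Nonempty :=
    hAc.imp fun y ⟨hyS, hyA⟩ => ⟨hyS, (hcover hyS).resolve_left fun hy => hyA (interior_subset hy)⟩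
  obtain ⟨y, -, hy, hy'⟩ := hS _ _ isOpen_interior isOpen_interior hcover hA_int hAc_int
  exact interior_subset hy' (interior_subset hy)

theorem mem_of_forall_notMem_frontier {α X : Type*} [ConditionallyCompleteLinearOrder α]
    [TopologicalSpace α] [OrderTopology α] [DenselyOrdered α] [TopologicalSpace X]
    {γ : α → X} {R : Set X} {a b : α} (hR : IsClosed R) (hab : a ≤ b)
    (hγ : ContinuousOn γ (Set.Icc a b)) (ha : γ a ∈ R)
    (havoid : ∀ u ∈ Set.Ico a b, γ u ∉ frontier R) : γ b ∈ R := by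
  by_contra hb
  obtain ⟨_, ⟨u, hu, rfl⟩, hu_frontier⟩ :=
    nonempty_inter_frontier_of_isPreconnected (isPreconnected_Icc.image γ hγ)
      ⟨γ a, Set.mem_image_of_mem γ (Set.left_mem_Icc.2 hab), ha⟩
      ⟨γ b, Set.mem_image_of_mem γ (Set.right_mem_Icc.2 hab), hb⟩
  have hub : u ≠ b := fun h => hb (h ▸ hR.frontier_subset hu_frontier)
  exact havoid u ⟨hu.1, lt_of_le_of_ne hu.2 hub⟩ hu_frontier

theorem min_add_min_sub_min {α : Type*} [AddCommGroup α] [LinearOrder α] [IsOrderedAddMonoid α]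
    {s t τ : α} (hs : 0 ≤ s) : min t τ + min s (τ - min t τ) = min (t + s) τ :=
  calc min t τ + min s (τ - min t τ)
      = min (min (t + s) (τ + s)) τ := by
        rw [← min_add_add_left, add_sub_cancel, min_add_add_right]
    _ = min (t + s) τ := by rw [min_assoc, min_eq_right (le_add_of_nonneg_right hs)]

section StoppedFlow

variable {n : ℕ} (φ : ℝ → EuclideanSpace ℝ (Fin n) → EuclideanSpace ℝ (Fin n))
  (R : Set (EuclideanSpace ℝ (Fin n))) (t : ℝ) (x : EuclideanSpace ℝ (Fin n))

/-- The time `min(t, τ(x))` for which the stopped flow follows `φ` from `x` up to time `t`. As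
`sInf ∅ = 0` in `ℝ`, the case `τ(x) = ∞` is split off. -/
def stopTime : ℝ :=
  if (hitSet φ R x).Nonempty then min t (sInf (hitSet φ R x)) else t

theorem stopFlow_eq_flow_stopTime : stopFlow φ R t x = φ (stopTime φ R t x) x := by
  unfold stopFlow stopTime
  split_ifs <;> rfl

theorem bddBelow_hitSet : BddBelow (hitSet φ R x) :=
  ⟨0, fun _ hu => hu.1⟩

theorem sInf_hitSet_nonneg : 0 ≤ sInf (hitSet φ R x) :=
  Real.sInf_nonneg fun _ hu => hu.1

theorem stopTime_zero : stopTime φ R 0 x = 0 := by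
  simp [stopTime, sInf_hitSet_nonneg]

variable {φ R t x} {r s u : ℝ}

theorem stopTime_of_nonempty (hne : (hitSet φ R x).Nonempty) :
    stopTime φ R t x = min t (sInf (hitSet φ R x)) :=
  if_pos hne

theorem stopTime_of_eq_empty (hempty : hitSet φ R x = ∅) : stopTime φ R t x = t :=
  if_neg (Set.not_nonempty_iff_eq_empty.2 hempty)

theorem stopTime_nonneg (ht : 0 ≤ t) : 0 ≤ stopTime φ R t x := by
  unfold stopTime
  split_ifs
  exacts [le_min ht (sInf_hitSet_nonneg φ R x), ht]

theorem stopTime_le_of_mem_hitSet (hu : u ∈ hitSet φ R x) : stopTime φ R t x ≤ u := by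
  rw [stopTime_of_nonempty ⟨u, hu⟩]
  exact (min_le_right _ _).trans (csInf_le (bddBelow_hitSet φ R x) hu)

theorem hitSet_flow (hr : 0 ≤ r) (hr_le : ∀ u ∈ hitSet φ R x, r ≤ u)
    (hφadd : ∀ u ≥ 0, φ u (φ r x) = φ (r + u) x) :
    hitSet φ R (φ r x) = OrderIso.subRight r '' hitSet φ R x := by
  ext u
  rw [OrderIso.image_eq_preimage_symm]
  change 0 ≤ u ∧ φ u (φ r x) ∈ frontier R ↔ u + r ∈ hitSet φ R x
  constructor
  · rintro ⟨hu, hmem⟩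
    rw [hφadd u hu, add_comm] at hmem
    exact ⟨add_nonneg hu hr, hmem⟩
  · intro hmem
    have hu : 0 ≤ u := nonneg_of_le_add_left (hr_le _ hmem)
    exact ⟨hu, by rw [hφadd u hu, add_comm]; exact hmem.2⟩

theorem stopTime_add_stopTime (hs : 0 ≤ s) (ht : 0 ≤ t)
    (hφadd : ∀ u ≥ 0, ∀ r ≥ 0, φ u (φ r x) = φ (r + u) x) :
    stopTime φ R t x + stopTime φ R s (stopFlow φ R t x) = stopTime φ R (t + s) x := by
  have hr : 0 ≤ stopTime φ R t x := stopTime_nonneg ht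
  have hshift := hitSet_flow hr (fun _ => stopTime_le_of_mem_hitSet) (hφadd · · _ hr)
  rw [← stopFlow_eq_flow_stopTime φ] at hshift
  by_cases hne : (hitSet φ R x).Nonempty
  · have hτ : sInf (hitSet φ R (stopFlow φ R t x)) =
        sInf (hitSet φ R x) - stopTime φ R t x := by
      rw [hshift, ← OrderIso.map_csInf' _ hne (bddBelow_hitSet φ R x), OrderIso.subRight_apply]
    have hne' : (hitSet φ R (stopFlow φ R t x)).Nonempty := hshift ▸ hne.image _
    rw [stopTime_of_nonempty hne', hτ, stopTime_of_nonempty hne, stopTime_of_nonempty hne,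
      min_add_min_sub_min hs]
  · rw [Set.not_nonempty_iff_eq_empty] at hne
    have hempty : hitSet φ R (stopFlow φ R t x) = ∅ := by rw [hshift, hne, Set.image_empty]
    rw [stopTime_of_eq_empty hne, stopTime_of_eq_empty hempty, stopTime_of_eq_empty hne]

theorem stopFlow_mem (hφ0 : φ 0 x = x) (hφc : ContinuousOn (φ · x) (Set.Ici 0))
    (hR : IsClosed R) (hx : x ∈ R) (ht : 0 ≤ t) : stopFlow φ R t x ∈ R := by
  rw [stopFlow_eq_flow_stopTime]
  refine mem_of_forall_notMem_frontier (γ := (φ · x)) hR (stopTime_nonneg ht)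
    (hφc.mono Set.Icc_subset_Ici_self) (hφ0.symm ▸ hx) fun u hu hu_frontier => ?_
  exact hu.2.not_ge (stopTime_le_of_mem_hitSet ⟨hu.1, hu_frontier⟩)

theorem stopFlow_zero (hφ0 : φ 0 x = x) : stopFlow φ R 0 x = x := by
  rw [stopFlow_eq_flow_stopTime, stopTime_zero, hφ0]

theorem stopFlow_stopFlow (hs : 0 ≤ s) (ht : 0 ≤ t)
    (hφadd : ∀ u ≥ 0, ∀ r ≥ 0, φ u (φ r x) = φ (r + u) x) :
    stopFlow φ R s (stopFlow φ R t x) = stopFlow φ R (t + s) x :=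
  calc stopFlow φ R s (stopFlow φ R t x)
      = φ (stopTime φ R s (stopFlow φ R t x)) (φ (stopTime φ R t x) x) := by
        rw [← stopFlow_eq_flow_stopTime φ R t, ← stopFlow_eq_flow_stopTime φ R s]
    _ = φ (stopTime φ R t x + stopTime φ R s (stopFlow φ R t x)) x :=
        hφadd _ (stopTime_nonneg hs) _ (stopTime_nonneg ht)
    _ = stopFlow φ R (t + s) x := by
        rw [stopTime_add_stopTime hs ht hφadd, stopFlow_eq_flow_stopTime]

end StoppedFlow

theorem stopFlow_flow_properties_general {n : ℕ}
    (φ : ℝ → EuclideanSpace ℝ (Fin n) → EuclideanSpace ℝ (Fin n))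
    (hφ0 : ∀ x, φ 0 x = x)
    (hφc : ∀ x, ContinuousOn (φ · x) (Set.Ici 0))
    (hφadd : ∀ x, ∀ s ≥ (0 : ℝ), ∀ t ≥ (0 : ℝ), φ s (φ t x) = φ (t + s) x)
    (R : Set (EuclideanSpace ℝ (Fin n))) (hR : IsClosed R) (x : EuclideanSpace ℝ (Fin n)) :
    (x ∈ R → ∀ t ≥ (0 : ℝ), stopFlow φ R t x ∈ R) ∧
    stopFlow φ R 0 x = x ∧
    (∀ s ≥ (0 : ℝ), ∀ t ≥ (0 : ℝ),
      stopFlow φ R s (stopFlow φ R t x) = stopFlow φ R (t + s) x) :=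
  ⟨fun hx _ ht => stopFlow_mem (hφ0 x) (hφc x) hR hx ht,
    stopFlow_zero (hφ0 x),
    fun _ hs _ ht => stopFlow_stopFlow hs ht (hφadd x)⟩

/-- the stopped flow satisfies the flow-map properties: for every `x ∈ R`
and `s, t ≥ 0`, `φ̂(t,x) ∈ R`, `φ̂(0,x) = x`, and `φ̂(s, φ̂(t,x)) = φ̂(t+s, x)`. -/
theorem stopFlow_flow_properties {n : ℕ}
    (f : EuclideanSpace ℝ (Fin n) → EuclideanSpace ℝ (Fin n))
    (φ : ℝ → EuclideanSpace ℝ (Fin n) → EuclideanSpace ℝ (Fin n))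
    (hf : LocallyLipschitz f)
    (hφ0 : ∀ x, φ 0 x = x)
    (hφd : ∀ x, ∀ t ≥ (0:ℝ), HasDerivWithinAt (fun s => φ s x) (f (φ t x)) (Set.Ici 0) t)
    (hφadd : ∀ x, ∀ s ≥ (0:ℝ), ∀ t ≥ (0:ℝ), φ s (φ t x) = φ (t + s) x)
    (R : Set (EuclideanSpace ℝ (Fin n))) (hR : IsCompact R) :
    ∀ x ∈ R,
      (∀ t ≥ (0:ℝ), stopFlow φ R t x ∈ R) ∧
      stopFlow φ R 0 x = x ∧
      (∀ s ≥ (0:ℝ), ∀ t ≥ (0:ℝ),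
        stopFlow φ R s (stopFlow φ R t x) = stopFlow φ R (t + s) x) := by
  have hφc (y) : ContinuousOn (φ · y) (Set.Ici 0) := fun t ht => (hφd y t ht).continuousWithinAt
  intro x hx
  exact (stopFlow_flow_properties_general φ hφ0 hφc hφadd R hR.isClosed x).imp_left (· hx)
end
end

section
/- For every bounded continuous h : ℝⁿ → ℝ, the function U_h is a fixed point of every Zubov–Koopman operator: for each t ≥ 0 and every x ∈ ℝⁿ, exp(−v_t(x))·U_h(φ(t,x)) = U_h(x), i.e., T_t U_h = U_h. -/
open Filter Topology MeasureTheory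
open scoped ENNReal

noncomputable section

/-- `U_h(x) = exp(−V(x))·h(x_eq)` when `V(x) < ∞`, and `U_h(x) = 0` otherwise. -/
def zubovU {n : ℕ} (φ : ℝ → EuclideanSpace ℝ (Fin n) → EuclideanSpace ℝ (Fin n))
    (η : EuclideanSpace ℝ (Fin n) → ℝ) (xeq : EuclideanSpace ℝ (Fin n))
    (h : EuclideanSpace ℝ (Fin n) → ℝ) (x : EuclideanSpace ℝ (Fin n)) : ℝ :=
  if zubovV φ η x < ⊤ then Real.exp (-(zubovV φ η x).toReal) * h xeq else 0

/-- The Zubov–Koopman operator `(T_t h)(x) = exp(−∫₀ᵗ η(φ(r,x)) dr) · h(φ(t,x))`. -/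
def zubovKoopman {n : ℕ} (φ : ℝ → EuclideanSpace ℝ (Fin n) → EuclideanSpace ℝ (Fin n))
    (η : EuclideanSpace ℝ (Fin n) → ℝ) (t : ℝ) (h : EuclideanSpace ℝ (Fin n) → ℝ)
    (x : EuclideanSpace ℝ (Fin n)) : ℝ :=
  Real.exp (-(∫ r in (0:ℝ)..t, η (φ r x))) * h (φ t x)

/-! Under the convention `exp (-∞) = 0`, `U_h = exp (-V) · h(x_eq)` holds everywhere. Splitting the
integral defining `V` at time `t` and translating its tail by the semigroup law gives
`V(x) = v_t(x) + V(φ(t, x))` in `[0, ∞]`; exponentiating yields `T_t U_h = U_h`, both sides being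
`0` where `V = ∞`. -/

theorem setLIntegral_Ioi_comp_add_left {G : Type*} [AddCommGroup G] [PartialOrder G]
    [IsOrderedAddMonoid G] [MeasurableSpace G] [MeasurableAdd G] (μ : Measure G)
    [μ.IsAddLeftInvariant] (g : G → ℝ≥0∞) (a c : G) :
    ∫⁻ s in Set.Ioi a, g (c + s) ∂μ = ∫⁻ r in Set.Ioi (c + a), g r ∂μ := by
  simpa only [Set.preimage_const_add_Ioi, add_sub_cancel_left] using
    (measurePreserving_add_left μ c).setLIntegral_comp_preimage_emb
      (measurableEmbedding_addLeft c) g (Set.Ioi (c + a))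

theorem setLIntegral_Ioi_eq_ofReal_intervalIntegral_add {μ : Measure ℝ} {g : ℝ → ℝ} {a b : ℝ}
    (hab : a ≤ b) (hint : IntervalIntegrable g μ a b) (hnn : 0 ≤ᵐ[μ.restrict (Set.Ioc a b)] g) :
    ∫⁻ s in Set.Ioi a, ENNReal.ofReal (g s) ∂μ
      = ENNReal.ofReal (∫ s in a..b, g s ∂μ) + ∫⁻ s in Set.Ioi b, ENNReal.ofReal (g s) ∂μ := by
  rw [← Set.Ioc_union_Ioi_eq_Ioi hab,
    lintegral_union measurableSet_Ioi (Set.Ioc_disjoint_Ioi le_rfl),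
    intervalIntegral.integral_of_le hab, ofReal_integral_eq_lintegral_ofReal hint.1 hnn]

theorem toReal_exp_neg_ofReal_add {a : ℝ} (ha : 0 ≤ a) (v : ℝ≥0∞) :
    (EReal.exp (-((ENNReal.ofReal a + v : ℝ≥0∞) : EReal))).toReal
      = Real.exp (-a) * (EReal.exp (-(v : EReal))).toReal := by
  rw [EReal.coe_ennreal_add, EReal.coe_ennreal_ofReal, max_eq_left ha,
    EReal.neg_add (.inl (EReal.coe_ne_bot a)) (.inl (EReal.coe_ne_top a)), sub_eq_add_neg,
    EReal.exp_add, ← EReal.coe_neg, EReal.exp_coe, ENNReal.toReal_mul,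
    ENNReal.toReal_ofReal (Real.exp_nonneg _)]

section Zubov

variable {n : ℕ} {φ : ℝ → EuclideanSpace ℝ (Fin n) → EuclideanSpace ℝ (Fin n)}
  {η : EuclideanSpace ℝ (Fin n) → ℝ} {x : EuclideanSpace ℝ (Fin n)} {t : ℝ}

theorem zubovV_flow_eq_setLIntegral_Ioi
    (hφadd : ∀ s ≥ (0 : ℝ), φ s (φ t x) = φ (t + s) x) :
    zubovV φ η (φ t x) = ∫⁻ r in Set.Ioi t, ENNReal.ofReal (η (φ r x)) :=
  calc zubovV φ η (φ t x)
      = ∫⁻ s in Set.Ioi 0, ENNReal.ofReal (η (φ (t + s) x)) :=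
        setLIntegral_congr_fun measurableSet_Ioi fun s (hs : 0 < s) => by
          simp only [hφadd s hs.le]
    _ = ∫⁻ r in Set.Ioi t, ENNReal.ofReal (η (φ r x)) := by
        rw [setLIntegral_Ioi_comp_add_left volume (fun r => ENNReal.ofReal (η (φ r x))), add_zero]

theorem zubovV_eq_ofReal_add_zubovV_flow (ht : 0 ≤ t)
    (hφadd : ∀ s ≥ (0 : ℝ), φ s (φ t x) = φ (t + s) x)
    (hint : IntervalIntegrable (fun r => η (φ r x)) volume 0 t)
    (hnn : ∀ r ∈ Set.Ioc 0 t, 0 ≤ η (φ r x)) :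
    zubovV φ η x = ENNReal.ofReal (∫ r in (0 : ℝ)..t, η (φ r x)) + zubovV φ η (φ t x) := by
  rw [zubovV_flow_eq_setLIntegral_Ioi hφadd]
  exact setLIntegral_Ioi_eq_ofReal_intervalIntegral_add ht hint
    (ae_restrict_of_forall_mem measurableSet_Ioc hnn)

theorem zubovU_eq_exp_neg_zubovV_mul (xeq : EuclideanSpace ℝ (Fin n))
    (h : EuclideanSpace ℝ (Fin n) → ℝ) :
    zubovU φ η xeq h x = (EReal.exp (-(zubovV φ η x : EReal))).toReal * h xeq := by
  by_cases hV : zubovV φ η x < ⊤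
  · rw [zubovU, if_pos hV, ← EReal.coe_ennreal_toReal hV.ne, ← EReal.coe_neg, EReal.exp_coe,
      ENNReal.toReal_ofReal (Real.exp_nonneg _)]
  · rw [zubovU, if_neg hV, not_lt_top_iff.mp hV, EReal.coe_ennreal_top, EReal.neg_top,
      EReal.exp_bot, ENNReal.toReal_zero, zero_mul]

theorem zubovU_fixed_point_general
    (hφadd : ∀ x, ∀ s ≥ (0 : ℝ), ∀ t ≥ (0 : ℝ), φ s (φ t x) = φ (t + s) x)
    (hηint : ∀ x, LocallyIntegrableOn (fun s => η (φ s x)) (Set.Ici 0))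
    (hηnn : ∀ x, 0 ≤ η x) (xeq : EuclideanSpace ℝ (Fin n))
    (h : EuclideanSpace ℝ (Fin n) → ℝ) (ht : 0 ≤ t) :
    zubovKoopman φ η t (zubovU φ η xeq h) = zubovU φ η xeq h := by
  funext x
  have hint : IntervalIntegrable (fun r => η (φ r x)) volume 0 t :=
    (intervalIntegrable_iff_integrableOn_Icc_of_le ht).mpr
      ((hηint x).integrableOn_compact_subset Set.Icc_subset_Ici_self isCompact_Icc)
  have hV : zubovV φ η x = ENNReal.ofReal (∫ r in (0 : ℝ)..t, η (φ r x)) + zubovV φ η (φ t x) :=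
    zubovV_eq_ofReal_add_zubovV_flow ht (fun s hs => hφadd x s hs t ht) hint fun r _ => hηnn _
  have hv : 0 ≤ ∫ r in (0 : ℝ)..t, η (φ r x) :=
    intervalIntegral.integral_nonneg ht fun r _ => hηnn _
  rw [zubovKoopman, zubovU_eq_exp_neg_zubovV_mul, zubovU_eq_exp_neg_zubovV_mul, hV,
    toReal_exp_neg_ofReal_add hv, mul_assoc]

end Zubov

/-- for every bounded continuous `h`, `U_h` is a fixed point of each
Zubov–Koopman operator: `T_t U_h = U_h` for all `t ≥ 0`. -/
theorem zubovU_fixed_point {n : ℕ}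
    (f : EuclideanSpace ℝ (Fin n) → EuclideanSpace ℝ (Fin n))
    (φ : ℝ → EuclideanSpace ℝ (Fin n) → EuclideanSpace ℝ (Fin n))
    (xeq : EuclideanSpace ℝ (Fin n))
    (hf : LocallyLipschitz f)
    (hφ0 : ∀ x, φ 0 x = x)
    (hφd : ∀ x, ∀ t ≥ (0:ℝ), HasDerivWithinAt (fun s => φ s x) (f (φ t x)) (Set.Ici 0) t)
    (hφadd : ∀ x, ∀ s ≥ (0:ℝ), ∀ t ≥ (0:ℝ), φ s (φ t x) = φ (t + s) x)
    (hfeq : f xeq = 0)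
    (hstab : ∃ δ > (0:ℝ), ∃ M > (0:ℝ), ∃ c > (0:ℝ), ∀ x : EuclideanSpace ℝ (Fin n),
      ‖x - xeq‖ ≤ δ → ∀ t ≥ (0:ℝ), ‖φ t x - xeq‖ ≤ M * ‖x - xeq‖ * Real.exp (-c * t))
    (η : EuclideanSpace ℝ (Fin n) → ℝ)
    (hη : LocallyLipschitz η) (hηnn : ∀ x, 0 ≤ η x)
    (hη0 : η xeq = 0) (hηpos : ∀ x, x ≠ xeq → 0 < η x)
    (hηinf : ∀ r > (0:ℝ), ∃ m > (0:ℝ), ∀ y, r ≤ ‖y - xeq‖ → m ≤ η y)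
    (h : EuclideanSpace ℝ (Fin n) → ℝ)
    (hh : Continuous h) (hhb : ∃ C, ∀ x, |h x| ≤ C) :
    ∀ t ≥ (0:ℝ), ∀ x,
      zubovKoopman φ η t (zubovU φ η xeq h) x = zubovU φ η xeq h x := by
  have hηint (x) : LocallyIntegrableOn (fun s => η (φ s x)) (Set.Ici 0) :=
    (hη.continuous.comp_continuousOn fun s hs =>
      (hφd x s hs).continuousWithinAt).locallyIntegrableOn measurableSet_Ici
  exact fun _ ht => congrFun (zubovU_fixed_point_general hφadd hηint hηnn xeq h ht)
end
end
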